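/- Let (z_j) be a normalized block basis of the natural basis of X_p, let (E_j) be pairwise disjoint subsets of ℕ with E_j contained in the support of z_j, and let c, δ > 0 satisfy, for all j: (a) |z_{j|E_j}|_2 ≥ δ·|z_j|_2 and (b) c·|z_{j|E_j}|_2 ≥ ω(E_j)^{(p-2)/(2p)}. Then the closed linear span [z_j] is complemented in X_p by a projection of norm at most max{δ^{-1}, c}, and [z_j] is isomorphic to X_{p,w'}, where w'_j = ω(E_j)^{(p-2)/(2p)}. -/

import Mathlib

open scoped ENNReal

noncomputable section

/-- The sequence space `ℓ_p` (of real sequences), for a real exponent `p`. -/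
abbrev SeqP (p : ℝ) := lp (fun _ : ℕ => ℝ) (ENNReal.ofReal p)

/-- The sequence space `ℓ_2` (of real sequences). -/
abbrev Seq2 := lp (fun _ : ℕ => ℝ) 2

/-- The space `X_{p,w}`, realized as the submodule of `ℓ_p ⊕_∞ ℓ_2` consisting of the
pairs `(x, y)` with `y n = w n * x n`.  Since the norm on the product is the maximum of
the two norms, this is exactly the completion of the finitely supported sequences under
`‖a‖ = max {|a|_p, |a|_{2,w}}`, the element with coordinates `a` being identified with
the pair `(a, w·a)`. -/
def XpwMod (p : ℝ) (w : ℕ → ℝ) : Submodule ℝ (SeqP p × Seq2) where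
  carrier := {z | ∀ n, (z.2 : ℕ → ℝ) n = w n * (z.1 : ℕ → ℝ) n}
  add_mem' := by
    intro a b ha hb n
    simp only [Prod.fst_add, Prod.snd_add, lp.coeFn_add, Pi.add_apply, ha n, hb n]
    ring
  zero_mem' := by
    intro n
    simp
  smul_mem' := by
    intro c a ha n
    simp only [Prod.smul_fst, Prod.smul_snd, lp.coeFn_smul, Pi.smul_apply, ha n,
      smul_eq_mul]
    ring

/-- The space `X_{p,w}` with its natural norm `‖a‖ = max {|a|_p, |a|_{2,w}}`. -/
def Xpw (p : ℝ) (w : ℕ → ℝ) : Type := ↥(XpwMod p w)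

variable {p : ℝ} {w : ℕ → ℝ}

instance [Fact (1 ≤ ENNReal.ofReal p)] : NormedAddCommGroup (Xpw p w) :=
  inferInstanceAs (NormedAddCommGroup ↥(XpwMod p w))

instance [Fact (1 ≤ ENNReal.ofReal p)] : NormedSpace ℝ (Xpw p w) :=
  inferInstanceAs (NormedSpace ℝ ↥(XpwMod p w))

/-- The pair of coordinates (in `ℓ_p` and in weighted `ℓ_2`) of an element of `X_{p,w}`. -/
def Xpw.pair (x : Xpw p w) : SeqP p × Seq2 := (show ↥(XpwMod p w) from x).val

/-- The underlying sequence of coordinates of an element of `X_{p,w}`. -/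
def seq (x : Xpw p w) : ℕ → ℝ := (Xpw.pair x).1

/-- `|x|_p` for `x ∈ X_{p,w}`. -/
def nrmP (x : Xpw p w) : ℝ := ‖(Xpw.pair x).1‖

/-- `|x|_2 = |x|_{2,w}` for `x ∈ X_{p,w}`. -/
def nrm2 (x : Xpw p w) : ℝ := ‖(Xpw.pair x).2‖

/-- The ratio `r(x) = |x|_2 / |x|_p`. -/
def ratio (x : Xpw p w) : ℝ := nrm2 x / nrmP x

/-- `ω(E) = ∑_{n ∈ E} w_n^{2p/(p-2)}`. -/
def omegaE (p : ℝ) (w : ℕ → ℝ) (E : Set ℕ) : ℝ :=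
  ∑' n : E, w (n : ℕ) ^ (2 * p / (p - 2))

/-- The pairing `⟨x, y⟩ = ∑_n x_n y_n w_n²`. -/
def pairW (w : ℕ → ℝ) (x y : Xpw p w) : ℝ :=
  ∑' n, seq x n * seq y n * w n ^ 2

/-- `w` is a weight sequence suitable for Rosenthal's space `X_p`: it is positive and for
every `ε > 0`, `∑_{w_n < ε} w_n^{2p/(p-2)} = ∞`. -/
def IsXpWeight (p : ℝ) (w : ℕ → ℝ) : Prop :=
  (∀ n, 0 < w n) ∧
    ∀ ε : ℝ, 0 < ε →
      (∑' n : {n : ℕ | w n < ε}, ENNReal.ofReal (w (n : ℕ) ^ (2 * p / (p - 2)))) = ⊤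

theorem memℓp_indicator {q : ℝ≥0∞} (E : Set ℕ) {f : ℕ → ℝ} (hf : Memℓp f q) :
    Memℓp (E.indicator f) q := by
  rcases ENNReal.trichotomy q with hq | hq | hq
  · subst hq
    refine memℓp_zero ((memℓp_zero_iff.mp hf).subset ?_)
    intro i hi
    simp only [Set.mem_setOf_eq] at hi ⊢
    intro h
    exact hi (by simp [Set.indicator_apply, h])
  · subst hq
    obtain ⟨C, hC⟩ := (memℓp_infty_iff.mp hf)
    refine memℓp_infty ⟨C, ?_⟩
    rintro x ⟨i, rfl⟩
    exact le_trans (norm_indicator_le_norm_self f i) (hC ⟨i, rfl⟩)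
  · refine memℓp_gen (Summable.of_nonneg_of_le (fun i => ?_) (fun i => ?_)
      (hf.summable hq))
    · positivity
    · exact Real.rpow_le_rpow (norm_nonneg _) (norm_indicator_le_norm_self f i) hq.le

/-- The restriction `x ↦ x_{|E}` of elements of `X_{p,w}` to a set `E` of coordinates. -/
def restrict (E : Set ℕ) (x : Xpw p w) : Xpw p w :=
  show ↥(XpwMod p w) from
  ⟨(⟨E.indicator ((Xpw.pair x).1 : ℕ → ℝ), memℓp_indicator E (lp.memℓp (Xpw.pair x).1)⟩,
    ⟨E.indicator ((Xpw.pair x).2 : ℕ → ℝ), memℓp_indicator E (lp.memℓp (Xpw.pair x).2)⟩), by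
    intro n
    by_cases hn : n ∈ E
    · have h : ((Xpw.pair x).2 : ℕ → ℝ) n = w n * ((Xpw.pair x).1 : ℕ → ℝ) n :=
        (show ↥(XpwMod p w) from x).2 n
      simpa [Set.indicator_of_mem hn] using h
    · simp [Set.indicator_of_notMem hn]⟩


theorem blk1 {r : ℝ≥0∞} {q : ℝ} (hr : r.toReal = q) (hq : 0 < q) (h : lp (fun _ : ℕ => ℝ) r)
    (F : ℕ → Finset ℕ) (κ : ℕ → ℕ) (hF : ∀ j, ∀ n ∈ F j, κ n = j) (f : ℕ → ℝ) (C : ℝ)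
    (hC : 0 ≤ C) (H : ∀ j, |f j| ^ q ≤ C ^ q * ∑ n ∈ F j, |h n| ^ q) :
    ∃ hm : Memℓp f r, ‖(⟨f, hm⟩ : lp (fun _ : ℕ => ℝ) r)‖ ≤ C * ‖h‖ := by
  subst hr
  have key : ∀ s : Finset ℕ, ∑ i ∈ s, ‖f i‖ ^ r.toReal ≤ (C * ‖h‖) ^ r.toReal := by
    intro s
    calc ∑ i ∈ s, ‖f i‖ ^ r.toReal
        ≤ ∑ i ∈ s, C ^ r.toReal * ∑ n ∈ F i, |h n| ^ r.toReal :=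
          Finset.sum_le_sum fun i _ => H i
      _ = C ^ r.toReal * ∑ n ∈ s.biUnion F, ‖h n‖ ^ r.toReal := by
          rw [← Finset.mul_sum, Finset.sum_biUnion]
          · rfl
          · intro i _ j _ hij
            refine Finset.disjoint_left.mpr fun n hn hn' => hij ?_
            rw [← hF i n hn, ← hF j n hn']
      _ ≤ C ^ r.toReal * ‖h‖ ^ r.toReal := by
          gcongr
          exact lp.sum_rpow_le_norm_rpow hq h _
      _ = _ := by rw [Real.mul_rpow hC (lp.norm_nonneg' h)]
  exact ⟨memℓp_gen' key, lp.norm_le_of_forall_sum_le hq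
    (mul_nonneg hC (lp.norm_nonneg' h)) key⟩

theorem blk2 {r : ℝ≥0∞} {q : ℝ} (hr : r.toReal = q) (hq : 0 < q) (h : lp (fun _ : ℕ => ℝ) r)
    (κ : ℕ → ℕ) (f : ℕ → ℝ) (C : ℝ)
    (hC : 0 ≤ C) (H : ∀ j, ∀ u : Finset ℕ, (∀ n ∈ u, κ n = j) →
      ∑ n ∈ u, |f n| ^ q ≤ C ^ q * |h j| ^ q) :
    ∃ hm : Memℓp f r, ‖(⟨f, hm⟩ : lp (fun _ : ℕ => ℝ) r)‖ ≤ C * ‖h‖ := by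
  subst hr
  have key : ∀ s : Finset ℕ, ∑ i ∈ s, ‖f i‖ ^ r.toReal ≤ (C * ‖h‖) ^ r.toReal := by
    intro s
    calc ∑ i ∈ s, ‖f i‖ ^ r.toReal
        = ∑ j ∈ s.image κ, ∑ i ∈ s with κ i = j, ‖f i‖ ^ r.toReal :=
          (Finset.sum_fiberwise_of_maps_to (fun i hi => Finset.mem_image_of_mem κ hi) _).symm
      _ ≤ ∑ j ∈ s.image κ, C ^ r.toReal * ‖h j‖ ^ r.toReal :=
          Finset.sum_le_sum fun j _ => H j _ (by simp)
      _ = C ^ r.toReal * ∑ n ∈ s.image κ, ‖h n‖ ^ r.toReal := by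
          rw [← Finset.mul_sum]
      _ ≤ C ^ r.toReal * ‖h‖ ^ r.toReal := by
          gcongr
          exact lp.sum_rpow_le_norm_rpow hq h _
      _ = _ := by rw [Real.mul_rpow hC (lp.norm_nonneg' h)]
  exact ⟨memℓp_gen' key, lp.norm_le_of_forall_sum_le hq
    (mul_nonneg hC (lp.norm_nonneg' h)) key⟩

/-- Build an element of `X_{p,w}` from its coordinates. -/
def xmk (p : ℝ) (w f : ℕ → ℝ) (h1 : Memℓp f (ENNReal.ofReal p))
    (h2 : Memℓp (fun n => w n * f n) 2) : Xpw p w :=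
  show ↥(XpwMod p w) from ⟨(⟨f, h1⟩, ⟨fun n => w n * f n, h2⟩), fun _ => rfl⟩

theorem snd_eq (x : Xpw p w) (n : ℕ) : ((Xpw.pair x).2 : ℕ → ℝ) n = w n * seq x n :=
  (show ↥(XpwMod p w) from x).2 n

theorem xnorm [Fact (1 ≤ ENNReal.ofReal p)] (x : Xpw p w) : ‖x‖ = max (nrmP x) (nrm2 x) := rfl

theorem xext {x y : Xpw p w} (h : ∀ n, seq x n = seq y n) : x = y := by
  apply Subtype.ext
  refine Prod.ext (lp.ext (funext h)) (lp.ext (funext fun n => ?_))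
  have := snd_eq x n
  have h2 := snd_eq y n
  rw [h n, ← h2] at this
  exact this

theorem seq_xmk (f : ℕ → ℝ) (h1 h2) : seq (xmk p w f h1 h2) = f := rfl

theorem seq_add [Fact (1 ≤ ENNReal.ofReal p)] (x y : Xpw p w) (n : ℕ) :
    seq (x + y) n = seq x n + seq y n := rfl

theorem seq_smul [Fact (1 ≤ ENNReal.ofReal p)] (a : ℝ) (x : Xpw p w) (n : ℕ) :
    seq (a • x) n = a * seq x n := rfl

theorem nrmP_nonneg (x : Xpw p w) : 0 ≤ nrmP x := lp.norm_nonneg' _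
theorem nrm2_nonneg (x : Xpw p w) : 0 ≤ nrm2 x := lp.norm_nonneg' _

/-- every element is in the closure of span of any family representing the unit vectors -/
theorem xhasSum [Fact (1 ≤ ENNReal.ofReal p)] (hp : 0 < p) (e : ℕ → Xpw p w)
    (he : ∀ j n, seq (e j) n = if n = j then 1 else 0) (x : Xpw p w) :
    HasSum (fun j => seq x j • e j) x := by
  have h1 := lp.hasSum_single (p := ENNReal.ofReal p) ENNReal.ofReal_ne_top (Xpw.pair x).1
  have h2 := lp.hasSum_single (p := 2) (by simp) (Xpw.pair x).2
  have h3 := h1.prodMk h2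
  let L : Xpw p w →+ SeqP p × Seq2 := (XpwMod p w).subtype.toAddMonoidHom
  have hL : Topology.IsInducing L := Topology.IsInducing.subtypeVal
  rw [← hL.hasSum_iff (g := L)]
  convert h3 using 1
  swap
  · rfl
  funext j
  have hs : ∀ n, seq (seq x j • e j) n = if n = j then seq x j else 0 := by
    intro n
    rw [seq_smul, he]; simp
  refine Prod.ext (lp.ext (funext fun n => ?_)) (lp.ext (funext fun n => ?_))
  · refine (hs n).trans ?_
    by_cases hn : n = j
    · subst hn; simp [seq]
    · simp [lp.single_apply, hn]
  · refine (snd_eq _ n).trans ?_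
    rw [hs]
    by_cases hn : n = j
    · subst hn; simp [snd_eq]
    · simp [lp.single_apply, hn]

theorem core [Fact (1 ≤ ENNReal.ofReal p)] (hp : 2 < p)
    (κ : ℕ → ℕ) (Z : ℕ → ℝ) (z : ℕ → Xpw p w)
    (hz : ∀ j n, seq (z j) n = if κ n = j then Z n else 0)
    (F : ℕ → Finset ℕ) (hF : ∀ j, ∀ n ∈ F j, κ n = j)
    (b W : ℕ → ℝ) (hb0 : ∀ j, 0 < b j) (hbF : ∀ j, b j ^ 2 = ∑ n ∈ F j, (w n * Z n) ^ 2)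
    (c δ : ℝ) (hc : 0 < c) (hδ : 0 < δ)
    (ha : ∀ j, δ * nrm2 (z j) ≤ b j) (hWc : ∀ j, W j ≤ c * b j) (hbW : ∀ j, b j ≤ W j)
    (hzp : ∀ j, nrmP (z j) ≤ 1)
    (hH : ∀ (x : ℕ → ℝ) (j : ℕ), ∑ n ∈ F j, (w n * x n) ^ 2 ≤
      ((∑ n ∈ F j, |x n| ^ p) ^ (1 / p) * W j) ^ 2) :
    (∃ P : Xpw p w →L[ℝ] Xpw p w,
      (∀ x : Xpw p w, P (P x) = P x) ∧
      LinearMap.range (P : Xpw p w →ₗ[ℝ] Xpw p w) = (Submodule.span ℝ (Set.range z)).topologicalClosure ∧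
      ‖P‖ ≤ max δ⁻¹ c) ∧
    Nonempty (↥((Submodule.span ℝ (Set.range z)).topologicalClosure) ≃L[ℝ]
      Xpw p W) := by
  have hp0 : 0 < p := by linarith
  have hpr : (ENNReal.ofReal p).toReal = p := ENNReal.toReal_ofReal hp0.le
  have h2r : (2 : ℝ≥0∞).toReal = 2 := by simp
  have hδ' : 0 ≤ δ⁻¹ := by positivity
  have hW0 : ∀ j, 0 < W j := fun j => (hb0 j).trans_le (hbW j)
  -- coefficient functionals
  let cf : (ℕ → ℝ) → ℕ → ℝ := fun x j => (∑ n ∈ F j, (w n * x n) * (w n * Z n)) / b j ^ 2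
  have hs : ∀ x j, (cf x j * b j) ^ 2 ≤ ∑ n ∈ F j, (w n * x n) ^ 2 := by
    intro x j
    have h := Finset.sum_mul_sq_le_sq_mul_sq (F j) (fun n => w n * x n) (fun n => w n * Z n)
    rw [← hbF] at h
    have hb := hb0 j
    have e : (cf x j * b j) ^ 2 = (∑ n ∈ F j, (w n * x n) * (w n * Z n)) ^ 2 / b j ^ 2 := by
      simp only [cf]; field_simp
    rw [e, div_le_iff₀ (by positivity)]
    exact h
  have hcp : ∀ x j, |cf x j| ^ p ≤ c ^ p * ∑ n ∈ F j, |x n| ^ p := by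
    intro x j
    have hb := hb0 j
    have hS : 0 ≤ ∑ n ∈ F j, |x n| ^ p := Finset.sum_nonneg fun n _ => by positivity
    have h1 := (hs x j).trans (hH x j)
    set t := (∑ n ∈ F j, |x n| ^ p) ^ (1 / p) with ht
    have ht0 : 0 ≤ t := by positivity
    have htp : t ^ p = ∑ n ∈ F j, |x n| ^ p := by
      rw [ht, ← Real.rpow_mul hS, one_div_mul_cancel hp0.ne', Real.rpow_one]
    have h2 := abs_le_of_sq_le_sq h1 (mul_nonneg ht0 (hW0 j).le)
    have h3 : |cf x j| * b j ≤ (c * t) * b j := by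
      have h4 : |cf x j| * b j = |cf x j * b j| := by rw [abs_mul, abs_of_pos hb]
      rw [h4]
      calc _ ≤ t * W j := h2
        _ ≤ t * (c * b j) := by gcongr; exact hWc j
        _ = _ := by ring
    have h5 := le_of_mul_le_mul_right h3 hb
    calc |cf x j| ^ p ≤ (c * t) ^ p := by gcongr
      _ = _ := by rw [Real.mul_rpow hc.le ht0, htp]
  have hcW : ∀ x j, |W j * cf x j| ^ (2 : ℝ) ≤ c ^ (2 : ℝ) * ∑ n ∈ F j, |w n * x n| ^ (2 : ℝ) := by
    intro x j
    simp only [Real.rpow_two, sq_abs]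
    calc (W j * cf x j) ^ 2 = W j ^ 2 * cf x j ^ 2 := by ring
      _ ≤ (c * b j) ^ 2 * cf x j ^ 2 := by
          gcongr
          · exact (hW0 j).le
          · exact hWc j
      _ = c ^ 2 * (cf x j * b j) ^ 2 := by ring
      _ ≤ _ := by gcongr; exact hs x j
  have hcB : ∀ x j, |nrm2 (z j) * cf x j| ^ (2 : ℝ) ≤
      δ⁻¹ ^ (2 : ℝ) * ∑ n ∈ F j, |w n * x n| ^ (2 : ℝ) := by
    intro x j
    simp only [Real.rpow_two, sq_abs]
    have hB : nrm2 (z j) ≤ δ⁻¹ * b j := by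
      rw [inv_mul_eq_div, le_div_iff₀ hδ]; linarith [ha j]
    have hB0 := nrm2_nonneg (z j)
    calc (nrm2 (z j) * cf x j) ^ 2 = nrm2 (z j) ^ 2 * cf x j ^ 2 := by ring
      _ ≤ (δ⁻¹ * b j) ^ 2 * cf x j ^ 2 := by gcongr
      _ = δ⁻¹ ^ 2 * (cf x j * b j) ^ 2 := by ring
      _ ≤ _ := by gcongr; exact hs x j
  -- the norms of `z j` control sums over fibres
  have hzP : ∀ j, ∀ u : Finset ℕ, (∀ n ∈ u, κ n = j) → ∑ n ∈ u, |Z n| ^ p ≤ 1 := by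
    intro j u hu
    have h := lp.sum_rpow_le_norm_rpow (p := ENNReal.ofReal p) (by rw [hpr]; exact hp0)
      (Xpw.pair (z j)).1 u
    rw [hpr] at h
    calc ∑ n ∈ u, |Z n| ^ p = ∑ n ∈ u, ‖(Xpw.pair (z j)).1 n‖ ^ p := by
          refine Finset.sum_congr rfl fun n hn => ?_
          have := hz j n
          rw [if_pos (hu n hn)] at this
          rw [← this]; rfl
      _ ≤ _ := h
      _ ≤ 1 := Real.rpow_le_one (nrmP_nonneg (z j)) (hzp j) hp0.le
  have hz2 : ∀ j, ∀ u : Finset ℕ, (∀ n ∈ u, κ n = j) →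
      ∑ n ∈ u, (w n * Z n) ^ 2 ≤ nrm2 (z j) ^ 2 := by
    intro j u hu
    have h := lp.sum_rpow_le_norm_rpow (p := 2) (by simp)
      (Xpw.pair (z j)).2 u
    rw [h2r] at h
    simp only [Real.rpow_two] at h
    calc ∑ n ∈ u, (w n * Z n) ^ 2 = ∑ n ∈ u, ‖(Xpw.pair (z j)).2 n‖ ^ 2 := by
          refine Finset.sum_congr rfl fun n hn => ?_
          have := hz j n
          rw [if_pos (hu n hn)] at this
          rw [snd_eq, ← this, Real.norm_eq_abs, sq_abs]
      _ ≤ _ := h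
  -- the synthesis map on `ℓ_p` and `ℓ_2` parts
  have hTp : ∀ (a : ℕ → ℝ) (h : SeqP p) (_ : ∀ j, h j = a j),
      ∃ hm : Memℓp (fun n => a (κ n) * Z n) (ENNReal.ofReal p),
        ‖(⟨_, hm⟩ : SeqP p)‖ ≤ 1 * ‖h‖ := by
    intro a h hh
    refine blk2 hpr hp0 h κ _ 1 zero_le_one ?_
    intro j u hu
    rw [hh, Real.one_rpow, one_mul]
    calc ∑ n ∈ u, |a (κ n) * Z n| ^ p = |a j| ^ p * ∑ n ∈ u, |Z n| ^ p := by
          rw [Finset.mul_sum]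
          refine Finset.sum_congr rfl fun n hn => ?_
          rw [hu n hn, abs_mul, Real.mul_rpow (abs_nonneg _) (abs_nonneg _)]
      _ ≤ |a j| ^ p * 1 := by gcongr; exact hzP j u hu
      _ = _ := mul_one _
  have hT2 : ∀ (a : ℕ → ℝ) (h : Seq2) (C : ℝ) (_ : 0 ≤ C)
      (_ : ∀ j, |nrm2 (z j) * a j| ≤ C * |h j|),
      ∃ hm : Memℓp (fun n => w n * (a (κ n) * Z n)) 2,
        ‖(⟨_, hm⟩ : Seq2)‖ ≤ C * ‖h‖ := by
    intro a h C hC hh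
    refine blk2 h2r two_pos h κ _ C hC ?_
    intro j u hu
    simp only [Real.rpow_two, sq_abs]
    calc ∑ n ∈ u, (w n * (a (κ n) * Z n)) ^ 2 = a j ^ 2 * ∑ n ∈ u, (w n * Z n) ^ 2 := by
          rw [Finset.mul_sum]
          refine Finset.sum_congr rfl fun n hn => ?_
          rw [hu n hn]; ring
      _ ≤ a j ^ 2 * nrm2 (z j) ^ 2 := by gcongr; exact hz2 j u hu
      _ = |nrm2 (z j) * a j| ^ 2 := by rw [sq_abs]; ring
      _ ≤ (C * |h j|) ^ 2 := by gcongr; exact hh j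
      _ = _ := by rw [mul_pow, sq_abs]
  -- analysis map
  have hA1 : ∀ x : Xpw p w, ∃ hm : Memℓp (cf (seq x)) (ENNReal.ofReal p),
      ‖(⟨_, hm⟩ : SeqP p)‖ ≤ c * nrmP x := fun x =>
    blk1 hpr hp0 (Xpw.pair x).1 F κ hF _ c hc.le (hcp (seq x))
  have hA2 : ∀ x : Xpw p w, ∃ hm : Memℓp (fun j => W j * cf (seq x) j) 2,
      ‖(⟨_, hm⟩ : Seq2)‖ ≤ c * nrm2 x := fun x =>
    blk1 h2r two_pos (Xpw.pair x).2 F κ hF _ c hc.le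
      (fun j => by simpa only [snd_eq] using hcW (seq x) j)
  have hA3 : ∀ x : Xpw p w, ∃ hm : Memℓp (fun j => nrm2 (z j) * cf (seq x) j) 2,
      ‖(⟨_, hm⟩ : Seq2)‖ ≤ δ⁻¹ * nrm2 x := fun x =>
    blk1 h2r two_pos (Xpw.pair x).2 F κ hF _ δ⁻¹ hδ'
      (fun j => by simpa only [snd_eq] using hcB (seq x) j)
  have hT1' : ∀ a : Xpw p W, ∃ hm : Memℓp (fun n => seq a (κ n) * Z n) (ENNReal.ofReal p),
        ‖(⟨_, hm⟩ : SeqP p)‖ ≤ 1 * nrmP a := fun a => hTp (seq a) (Xpw.pair a).1 fun _ => rfl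
  have hT2' : ∀ a : Xpw p W, ∃ hm : Memℓp (fun n => w n * (seq a (κ n) * Z n)) 2,
        ‖(⟨_, hm⟩ : Seq2)‖ ≤ δ⁻¹ * nrm2 a := fun a =>
    hT2 (seq a) (Xpw.pair a).2 δ⁻¹ hδ' fun j => by
      have hB : nrm2 (z j) ≤ δ⁻¹ * W j := by
        rw [inv_mul_eq_div, le_div_iff₀ hδ]; linarith [ha j, hbW j]
      rw [snd_eq, abs_mul, abs_mul, abs_of_nonneg (nrm2_nonneg _), abs_of_pos (hW0 j), ← mul_assoc]
      gcongr
  let A : Xpw p w →L[ℝ] Xpw p W := LinearMap.mkContinuous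
    { toFun := fun x => xmk p W (cf (seq x)) (hA1 x).1 (hA2 x).1
      map_add' := by
        intro x y
        refine xext fun j => ?_
        rw [seq_add]
        simp only [seq_xmk, cf, seq_add, ← add_div, ← Finset.sum_add_distrib]
        congr 1
        exact Finset.sum_congr rfl fun n _ => by ring
      map_smul' := by
        intro r x
        refine xext fun j => ?_
        simp only [RingHom.id_apply]
        rw [seq_smul]
        simp only [seq_xmk, cf, seq_smul, ← mul_div_assoc, Finset.mul_sum]
        congr 1
        exact Finset.sum_congr rfl fun n _ => by ring } c
    (by
      intro x
      rw [xnorm x, mul_max_of_nonneg _ _ hc.le]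
      exact max_le_max (hA1 x).2 (hA2 x).2)
  have hAs : ∀ x, seq (A x) = cf (seq x) := fun x => rfl
  let T : Xpw p W →L[ℝ] Xpw p w := LinearMap.mkContinuous
    { toFun := fun a => xmk p w (fun n => seq a (κ n) * Z n) (hT1' a).1 (hT2' a).1
      map_add' := by
        intro x y
        refine xext fun j => ?_
        rw [seq_add]
        simp only [seq_xmk, seq_add]
        ring
      map_smul' := by
        intro r x
        refine xext fun j => ?_
        simp only [RingHom.id_apply]
        rw [seq_smul]
        simp only [seq_xmk, seq_smul]
        ring } (max 1 δ⁻¹)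
    (by
      intro a
      have h1 := (hT1' a).2
      have h2 := (hT2' a).2
      rw [xnorm a]
      refine max_le (h1.trans ?_) (h2.trans ?_)
      · exact mul_le_mul (le_max_left _ _) (le_max_left _ _) (nrmP_nonneg _) (by positivity)
      · exact mul_le_mul (le_max_right _ _) (le_max_right _ _) (nrm2_nonneg _) (by positivity))
  have hTs : ∀ a n, seq (T a) n = seq a (κ n) * Z n := fun a n => rfl
  have hAT : ∀ a, A (T a) = a := by
    intro a
    refine xext fun j => ?_
    rw [hAs]
    have hb := hb0 j
    simp only [cf]
    rw [div_eq_iff (by positivity), hbF, Finset.mul_sum]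
    refine Finset.sum_congr rfl fun n hn => ?_
    rw [hTs, hF j n hn]; ring
  have hPn : ∀ x, ‖T (A x)‖ ≤ max δ⁻¹ c * ‖x‖ := by
    intro x
    have h1 : nrmP (T (A x)) ≤ c * nrmP x := by
      refine ((hT1' (A x)).2).trans ?_
      rw [one_mul]
      exact (hA1 x).2
    have h2 : nrm2 (T (A x)) ≤ δ⁻¹ * nrm2 x := by
      obtain ⟨hm, hle⟩ := hA3 x
      obtain ⟨hm', hle'⟩ := hT2 (seq (A x)) ⟨_, hm⟩ 1 zero_le_one (fun j => by
        rw [one_mul]; exact le_rfl)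
      rw [one_mul] at hle'
      exact hle'.trans hle
    rw [xnorm, xnorm x]
    refine max_le (h1.trans ?_) (h2.trans ?_)
    · exact mul_le_mul (le_max_right _ _) (le_max_left _ _) (nrmP_nonneg _) (by positivity)
    · exact mul_le_mul (le_max_left _ _) (le_max_right _ _) (nrm2_nonneg _) (by positivity)
  -- unit vectors of `X_{p,W}` are `A (z j)`
  have hTz : ∀ j, T (A (z j)) = z j := by
    intro j
    refine xext fun n => ?_
    rw [hTs, hAs, hz]
    simp only [cf]
    have hb := hb0 j
    split_ifs with h
    · subst h
      have : ∑ m ∈ F (κ n), w m * seq (z (κ n)) m * (w m * Z m) = b (κ n) ^ 2 := by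
        rw [hbF]
        refine Finset.sum_congr rfl fun m hm => ?_
        rw [hz, if_pos (hF _ m hm)]; ring
      rw [this, div_self (by positivity), one_mul]
    · have : ∑ m ∈ F (κ n), w m * seq (z j) m * (w m * Z m) = 0 := by
        refine Finset.sum_eq_zero fun m hm => ?_
        rw [hz, if_neg (by rw [hF _ m hm]; exact h)]; ring
      rw [this]; simp
  have hAz : ∀ j n, seq (A (z j)) n = if n = j then 1 else 0 := by
    intro j n
    rw [hAs]
    simp only [cf]
    have hb := hb0 n
    split_ifs with h
    · subst h
      rw [div_eq_one_iff_eq (by positivity), hbF]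
      refine Finset.sum_congr rfl fun m hm => ?_
      rw [hz, if_pos (hF _ m hm)]; ring
    · rw [div_eq_zero_iff]; left
      refine Finset.sum_eq_zero fun m hm => ?_
      rw [hz, if_neg (by rw [hF _ m hm]; exact h)]; ring
  have hTmem : ∀ a, T a ∈ (Submodule.span ℝ (Set.range z)).topologicalClosure := by
    intro a
    have h := (xhasSum hp0 (fun j => A (z j)) hAz a).mapL T
    simp only [map_smul, hTz] at h
    refine mem_closure_of_tendsto h (Filter.Eventually.of_forall fun s => ?_)
    exact Submodule.sum_mem _ fun j _ => Submodule.smul_mem _ _ (Submodule.subset_span ⟨j, rfl⟩)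
  have hfix : ∀ x ∈ (Submodule.span ℝ (Set.range z)).topologicalClosure, T (A x) = x := by
    have hle : (Submodule.span ℝ (Set.range z)).topologicalClosure ≤
        LinearMap.eqLocus ((T.comp A : Xpw p w →L[ℝ] Xpw p w) : Xpw p w →ₗ[ℝ] Xpw p w)
          LinearMap.id := by
      refine Submodule.topologicalClosure_minimal _ ?_ ?_
      · rw [Submodule.span_le]
        rintro _ ⟨j, rfl⟩
        exact hTz j
      · exact isClosed_eq (T.comp A).continuous continuous_id
    exact fun x hx => hle hx
  refine ⟨⟨T.comp A, fun x => ?_, ?_, ?_⟩, ⟨?_⟩⟩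
  · simp [hAT]
  · apply le_antisymm
    · rintro _ ⟨x, rfl⟩
      exact hTmem (A x)
    · intro x hx
      exact ⟨x, hfix x hx⟩
  · exact ContinuousLinearMap.opNorm_le_bound _ (by positivity) hPn
  · exact ContinuousLinearEquiv.equivOfInverse (A.comp (Submodule.subtypeL _))
      (T.codRestrict _ hTmem)
      (fun x => Subtype.ext (hfix x x.2))
      (fun a => hAT a)

theorem omega_eq (p : ℝ) (w : ℕ → ℝ) (F : Finset ℕ) :
    omegaE p w (F : Set ℕ) = ∑ n ∈ F, w n ^ (2 * p / (p - 2)) :=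
  Finset.tsum_subtype F fun n => w n ^ (2 * p / (p - 2))

theorem holderF (hp : 2 < p) (hw : ∀ n, 0 < w n) (F : Finset ℕ) (x : ℕ → ℝ) :
    ∑ n ∈ F, (w n * x n) ^ 2 ≤
      ((∑ n ∈ F, |x n| ^ p) ^ (1 / p) *
        (∑ n ∈ F, w n ^ (2 * p / (p - 2))) ^ ((p - 2) / (2 * p))) ^ 2 := by
  have hp2 : 0 < p - 2 := by linarith
  have hp0 : 0 < p := by linarith
  have hconj : (p / 2).HolderConjugate (p / (p - 2)) := by
    rw [Real.holderConjugate_iff]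
    refine ⟨by linarith, ?_⟩
    field_simp
    ring
  have h := Real.inner_le_Lp_mul_Lq_of_nonneg F hconj (f := fun n => |x n| ^ 2)
    (g := fun n => w n ^ 2) (fun i _ => by positivity) (fun i _ => by positivity)
  have e1 : ∀ n, (|x n| ^ 2) ^ (p / 2) = |x n| ^ p := by
    intro n
    rw [← Real.rpow_natCast_mul (abs_nonneg _)]
    congr 1
    push_cast; field_simp
  have e2 : ∀ n, (w n ^ 2) ^ (p / (p - 2)) = w n ^ (2 * p / (p - 2)) := by
    intro n
    rw [← Real.rpow_natCast_mul (hw n).le]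
    congr 1
    push_cast; field_simp
  simp only [e1, e2] at h
  have h1 : 0 ≤ ∑ n ∈ F, |x n| ^ p := Finset.sum_nonneg fun n _ => by positivity
  have h2 : 0 ≤ ∑ n ∈ F, w n ^ (2 * p / (p - 2)) :=
    Finset.sum_nonneg fun n _ => Real.rpow_nonneg (hw n).le _
  rw [mul_pow, ← Real.rpow_mul_natCast h1, ← Real.rpow_mul_natCast h2]
  convert h using 1
  · exact Finset.sum_congr rfl fun n _ => by rw [sq_abs]; ring
  · congr 2
    · push_cast; field_simp
    · push_cast; field_simp

/-- Proposition 1.2: if `(z_j)` is a normalized block basis of the natural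
basis of `X_p`, `(E_j)` are pairwise disjoint sets with `E_j` contained in the support of
`z_j`, and (a) `|z_{j|E_j}|_2 ≥ δ |z_j|_2`, (b) `c |z_{j|E_j}|_2 ≥ ω(E_j)^{(p-2)/(2p)}`
for all `j`, then `[z_j]` is complemented in `X_p` by a projection of norm at most
`max {δ⁻¹, c}`, and `[z_j]` is isomorphic to `X_{p,w'}` where
`w'_j = ω(E_j)^{(p-2)/(2p)}`. -/
theorem stmt5 (p : ℝ) (hp : 2 < p) [Fact (1 ≤ ENNReal.ofReal p)]
    (w : ℕ → ℝ) (hw : IsXpWeight p w)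
    (z : ℕ → Xpw p w) (hz1 : ∀ j, ‖z j‖ = 1)
    (hfin : ∀ j, (Function.support (seq (z j))).Finite)
    (hblock : ∀ j k : ℕ, j < k → ∀ m ∈ Function.support (seq (z j)),
      ∀ n ∈ Function.support (seq (z k)), m < n)
    (E : ℕ → Set ℕ) (hE : ∀ j, E j ⊆ Function.support (seq (z j)))
    (hdisj : Pairwise (Function.onFun Disjoint E))
    (c δ : ℝ) (hc : 0 < c) (hδ : 0 < δ)
    (ha : ∀ j, nrm2 (restrict (E j) (z j)) ≥ δ * nrm2 (z j))
    (hb : ∀ j, c * nrm2 (restrict (E j) (z j)) ≥ omegaE p w (E j) ^ ((p - 2) / (2 * p))) :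
    (∃ P : Xpw p w →L[ℝ] Xpw p w,
      (∀ x : Xpw p w, P (P x) = P x) ∧
      LinearMap.range (P : Xpw p w →ₗ[ℝ] Xpw p w) = (Submodule.span ℝ (Set.range z)).topologicalClosure ∧
      ‖P‖ ≤ max δ⁻¹ c) ∧
    Nonempty (↥((Submodule.span ℝ (Set.range z)).topologicalClosure) ≃L[ℝ]
      Xpw p (fun j => omegaE p w (E j) ^ ((p - 2) / (2 * p)))) := by
  classical
  have hw0 := hw.1
  have hp0 : 0 < p := by linarith
  have huniq : ∀ n j k, seq (z j) n ≠ 0 → seq (z k) n ≠ 0 → j = k := by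
    intro n j k hj hk
    rcases lt_trichotomy j k with h | h | h
    · exact absurd (hblock j k h n hj n hk) (lt_irrefl _)
    · exact h
    · exact absurd (hblock k j h n hk n hj) (lt_irrefl _)
  let κ : ℕ → ℕ := fun n => if h : ∃ j, seq (z j) n ≠ 0 then h.choose else 0
  have hκ : ∀ n j, seq (z j) n ≠ 0 → κ n = j := by
    intro n j hj
    have h : ∃ j, seq (z j) n ≠ 0 := ⟨j, hj⟩
    have e : κ n = h.choose := dif_pos h
    rw [e]
    exact huniq n _ _ h.choose_spec hj
  let Z : ℕ → ℝ := fun n => seq (z (κ n)) n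
  have hz : ∀ j n, seq (z j) n = if κ n = j then Z n else 0 := by
    intro j n
    split_ifs with h
    · subst h; rfl
    · by_contra h0
      exact h (hκ n j h0)
  have hEf : ∀ j, (E j).Finite := fun j => (hfin j).subset (hE j)
  let F : ℕ → Finset ℕ := fun j => (hEf j).toFinset
  have hFE : ∀ j, (F j : Set ℕ) = E j := fun j => (hEf j).coe_toFinset
  have hF : ∀ j, ∀ n ∈ F j, κ n = j := fun j n hn =>
    hκ n j (hE j ((hEf j).mem_toFinset.mp hn))
  have hW : ∀ j, omegaE p w (E j) = ∑ n ∈ F j, w n ^ (2 * p / (p - 2)) := by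
    intro j
    rw [← hFE j, omega_eq]
  have hH : ∀ (x : ℕ → ℝ) (j : ℕ), ∑ n ∈ F j, (w n * x n) ^ 2 ≤
      ((∑ n ∈ F j, |x n| ^ p) ^ (1 / p) * omegaE p w (E j) ^ ((p - 2) / (2 * p))) ^ 2 := by
    intro x j
    rw [hW]
    exact holderF hp hw0 (F j) x
  have hbF : ∀ j, nrm2 (restrict (E j) (z j)) ^ 2 = ∑ n ∈ F j, (w n * Z n) ^ 2 := by
    intro j
    have h := lp.norm_rpow_eq_tsum (p := 2) (by simp) (Xpw.pair (restrict (E j) (z j))).2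
    simp only [ENNReal.toReal_ofNat, Real.rpow_two] at h
    refine h.trans ?_
    have hv : ∀ n, ((Xpw.pair (restrict (E j) (z j))).2 : ℕ → ℝ) n =
        (E j).indicator ((Xpw.pair (z j)).2 : ℕ → ℝ) n := fun n => rfl
    rw [tsum_eq_sum (s := F j)]
    · refine Finset.sum_congr rfl fun n hn => ?_
      rw [hv, Set.indicator_of_mem ((hEf j).mem_toFinset.mp hn), snd_eq, hz j n,
        if_pos (hF j n hn), Real.norm_eq_abs, sq_abs]
    · intro n hn
      rw [hv, Set.indicator_of_notMem (fun h => hn ((hEf j).mem_toFinset.mpr h))]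
      simp
  have hb0 : ∀ j, 0 < nrm2 (restrict (E j) (z j)) := by
    intro j
    refine lt_of_lt_of_le (mul_pos hδ ?_) (ha j)
    refine lt_of_le_of_ne (nrm2_nonneg _) fun h0 => ?_
    have h1 : (Xpw.pair (z j)).2 = 0 := norm_eq_zero.mp h0.symm
    have h2 : z j = 0 := by
      refine xext fun n => ?_
      have h3 := snd_eq (z j) n
      rw [h1] at h3
      have h4 : seq (z j) n = 0 := by
        rcases mul_eq_zero.mp h3.symm with h | h
        · exact absurd h (hw0 n).ne'
        · exact h
      rw [h4]; rfl
    have h5 := hz1 j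
    rw [h2, norm_zero] at h5
    exact zero_ne_one h5
  have hzp : ∀ j, nrmP (z j) ≤ 1 := by
    intro j
    rw [← hz1 j, xnorm]
    exact le_max_left _ _
  have hbW : ∀ j, nrm2 (restrict (E j) (z j)) ≤ omegaE p w (E j) ^ ((p - 2) / (2 * p)) := by
    intro j
    have hpr : (ENNReal.ofReal p).toReal = p := ENNReal.toReal_ofReal hp0.le
    have hS0 : 0 ≤ ∑ n ∈ F j, |Z n| ^ p := Finset.sum_nonneg fun n _ => by positivity
    have hS : ∑ n ∈ F j, |Z n| ^ p ≤ 1 := by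
      have h := lp.sum_rpow_le_norm_rpow (p := ENNReal.ofReal p) (by rw [hpr]; exact hp0)
        (Xpw.pair (z j)).1 (F j)
      rw [hpr] at h
      calc ∑ n ∈ F j, |Z n| ^ p = ∑ n ∈ F j, ‖(Xpw.pair (z j)).1 n‖ ^ p := by
            refine Finset.sum_congr rfl fun n hn => ?_
            have := hz j n
            rw [if_pos (hF j n hn)] at this
            rw [← this]; rfl
        _ ≤ _ := h
        _ ≤ 1 := Real.rpow_le_one (nrmP_nonneg (z j)) (hzp j) hp0.le
    have hW0 : 0 ≤ omegaE p w (E j) ^ ((p - 2) / (2 * p)) := by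
      refine Real.rpow_nonneg ?_ _
      rw [hW]
      exact Finset.sum_nonneg fun n _ => Real.rpow_nonneg (hw0 n).le _
    have h := hH Z j
    rw [← hbF] at h
    refine (abs_le_of_sq_le_sq' h (by positivity)).2.trans ?_
    have h1 : (∑ n ∈ F j, |Z n| ^ p) ^ (1 / p) ≤ 1 := Real.rpow_le_one hS0 hS (by positivity)
    exact mul_le_of_le_one_left hW0 h1
  exact core hp κ Z z hz F hF (fun j => nrm2 (restrict (E j) (z j))) _ hb0 hbF c δ hc hδ
    ha hb hbW hzp hH
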